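/- For integers M ≥ 2, K with 2 ≤ K ≤ M, N > 0, and real r with 0 < r ≤ r_th := K(M−1)/(M(K−1)), the two thresholds p_0(r) = min( Kr(K−1) / (K(M−1) + r(K−1)(K/N − 1)), 1) and p_1(r) = min( (K − r(K−1)) / (1 + (K − r(K−1))(1/N − 1/K)), 1) satisfy p_0(r) ≤ p_1(r), provided K − r(K−1) ≥ 0 and all denominators are positive. -/

import Mathlib

/-! With `s = r(K - 1)` and `c = 1/N - 1/K`, the thresholds before truncation at `1` have
reciprocals `(M - 1)/s + c` and `1/(K - s) + c`. The shared shift `c` cancels from the comparison,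
which becomes `s ≤ (K - s)(M - 1)`, that is, `r ≤ K(M - 1)/(M(K - 1))`. -/

section OrderedField

variable {𝕜 : Type*} [Field 𝕜] [LinearOrder 𝕜] [IsStrictOrderedRing 𝕜]

theorem div_add_mul_le_div_add_mul_iff {a b c d e : 𝕜} (hb : 0 < b + a * c) (he : 0 < e + d * c) :
    a / (b + a * c) ≤ d / (e + d * c) ↔ a * e ≤ d * b := by
  rw [div_le_div_iff₀ hb he, mul_add, mul_add, mul_left_comm d a c, add_le_add_iff_right]

theorem stmt_10_general {M K N r : 𝕜} (hM : 0 < M) (hK : 1 < K) (hN : N ≠ 0)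
    (hden0 : 0 < K * (M - 1) + r * (K - 1) * (K / N - 1))
    (hden1 : 0 < 1 + (K - r * (K - 1)) * (1 / N - 1 / K)) :
    K * r * (K - 1) / (K * (M - 1) + r * (K - 1) * (K / N - 1))
        ≤ (K - r * (K - 1)) / (1 + (K - r * (K - 1)) * (1 / N - 1 / K))
      ↔ r ≤ K * (M - 1) / (M * (K - 1)) := by
  have hK0 : 0 < K := zero_lt_one.trans hK
  have common_shift : r * (K - 1) * (K / N - 1) = K * r * (K - 1) * (1 / N - 1 / K) := by
    field_simp
  rw [common_shift] at hden0 ⊢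
  rw [div_add_mul_le_div_add_mul_iff hden0 hden1, le_div_iff₀ (mul_pos hM (sub_pos.mpr hK))]
  calc K * r * (K - 1) * 1 ≤ (K - r * (K - 1)) * (K * (M - 1))
      ↔ K * (r * (M * (K - 1))) ≤ K * (K * (M - 1)) := by
        constructor <;> intro h <;> linarith
    _ ↔ r * (M * (K - 1)) ≤ K * (M - 1) := mul_le_mul_iff_right₀ hK0

end OrderedField

/-- Adaptive caching thresholds: p_0(r) ≤ p_1(r) for 0 < r ≤ r_th. -/
theorem stmt_10 (M K : ℕ) (N r : ℝ)
    (hM : 2 ≤ M) (hK : 2 ≤ K) (hMK : K ≤ M) (hN : 0 < N)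
    (hr : 0 < r) (hrth : r ≤ (K : ℝ) * ((M : ℝ) - 1) / ((M : ℝ) * ((K : ℝ) - 1)))
    (hnum : 0 ≤ (K : ℝ) - r * ((K : ℝ) - 1))
    (hden0 : 0 < (K : ℝ) * ((M : ℝ) - 1) + r * ((K : ℝ) - 1) * ((K : ℝ) / N - 1))
    (hden1 : 0 < 1 + ((K : ℝ) - r * ((K : ℝ) - 1)) * (1 / N - 1 / (K : ℝ))) :
    min ((K : ℝ) * r * ((K : ℝ) - 1)
        / ((K : ℝ) * ((M : ℝ) - 1) + r * ((K : ℝ) - 1) * ((K : ℝ) / N - 1))) 1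
      ≤ min (((K : ℝ) - r * ((K : ℝ) - 1))
        / (1 + ((K : ℝ) - r * ((K : ℝ) - 1)) * (1 / N - 1 / (K : ℝ)))) 1 := by
  have hM0 : (0 : ℝ) < M := by exact_mod_cast zero_lt_two.trans_le hM
  have hK1 : (1 : ℝ) < K := by exact_mod_cast hK
  exact min_le_min_right 1 ((stmt_10_general hM0 hK1 hN.ne' hden0 hden1).mpr hrth)
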